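/- Let V be a finite-dimensional vector space over a field of characteristic 0 and N a nilpotent endomorphism of V. Then there exists a unique finite increasing filtration (M_i V)_{i∈ℤ} of V such that N(M_i V) ⊆ M_{i−2} V for all i, and for every i ≥ 0 the map N^i induces an isomorphism gr^M_i V → gr^M_{−i} V. -/

import Mathlib

/-!
For existence, take `W k = ∑ i, N ^ i (ker N ^ (k + 2 * i + 1))`. Comparing summands gives
`N (W k) ⊆ W (k - 2)` and `W (-j) ⊆ N ^ j (W j)`. If `N ^ j x ∈ W (-(j + 1))`, then
`N ^ j x = N ^ (j + 1) z` for some `z ∈ W (j + 1)`, so `x` is the sum of `x - N z ∈ ker N ^ j` and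
`N z`, both in `W (j - 1)`.

For uniqueness, let `M` and `M'` be two such filtrations. Injectivity on graded pieces propagates to
injectivity of `N ^ i : V / M' (i - 1) → V / M' (-i - 1)`, so `M (-(j + 2)) ≤ M' (-(j + 2))` forces
`M j ≤ M' j`; surjectivity of `N ^ j` on graded pieces then recovers `M (-j) ≤ M' (-j)` from
`M j ≤ M' j` and `M (-(j + 1)) ≤ M' (-(j + 1))`. A descending induction on `j` concludes.
-/

section Quotient

variable {R V W : Type*} [Ring R] [AddCommGroup V] [Module R V] [AddCommGroup W] [Module R W]
  {p A : Submodule R V} {q B : Submodule R W} {f : V →ₗ[R] W}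

theorem map_mapQ_map_mkQ_eq_iff (h : p ≤ q.comap f) :
    (A.map p.mkQ).map (p.mapQ q f h) = B.map q.mkQ ↔ q ⊔ A.map f = q ⊔ B := by
  rw [← Submodule.map_comp, Submodule.mapQ_mkQ, Submodule.map_comp,
    ← (Submodule.comap_injective_of_surjective q.mkQ_surjective).eq_iff,
    Submodule.comap_map_mkQ, Submodule.comap_map_mkQ]

theorem forall_mem_map_mkQ_mapQ_eq_zero_iff (h : p ≤ q.comap f) :
    (∀ x ∈ A.map p.mkQ, p.mapQ q f h x = 0 → x = 0) ↔ A ⊓ q.comap f ≤ p := by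
  simp only [Submodule.mem_map, forall_exists_index, and_imp, forall_apply_eq_imp_iff₂,
    Submodule.mkQ_apply, Submodule.mapQ_apply, Submodule.Quotient.mk_eq_zero]
  exact ⟨fun H x hx => H x hx.1 hx.2, fun H x hxA hx => H ⟨hxA, hx⟩⟩

end Quotient

section Monodromy

variable {R V : Type*} [Ring R] [AddCommGroup V] [Module R V] {N : Module.End R V}
  {M M' : ℤ → Submodule R V}

theorem map_pow_le_of_map_le {c : ℤ} (hM : ∀ i, (M i).map N ≤ M (i - c)) (n : ℕ) (k : ℤ) :
    (M k).map (N ^ n) ≤ M (k - n * c) := by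
  induction n with
  | zero => simp [Module.End.one_eq_id]
  | succ n ih =>
    calc (M k).map (N ^ (n + 1)) = ((M k).map (N ^ n)).map N := by
          rw [pow_succ', Module.End.mul_eq_comp, Submodule.map_comp]
      _ ≤ (M (k - n * c)).map N := Submodule.map_mono ih
      _ ≤ M (k - n * c - c) := hM _
      _ = M (k - (n + 1 : ℕ) * c) := by congr 1; push_cast; ring

/-- `M` is a monodromy (weight) filtration of `N`: a finite increasing filtration, shifted by `-2`
under `N`, such that `N ^ i` induces an isomorphism from `M i / M (i - 1)` to
`M (-i) / M (-i - 1)`. The isomorphism is encoded without quotients: `le_sup_map_pow` is its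
surjectivity and `inf_comap_pow_le` its injectivity. -/
structure IsMonodromyFiltration (N : Module.End R V) (M : ℤ → Submodule R V) : Prop where
  monotone : Monotone M
  exists_eq_bot : ∃ a, M a = ⊥
  exists_eq_top : ∃ b, M b = ⊤
  map_le : ∀ i, (M i).map N ≤ M (i - 2)
  le_sup_map_pow : ∀ i : ℕ, M (-i) ≤ M (-i - 1) ⊔ (M i).map (N ^ i)
  inf_comap_pow_le : ∀ i : ℕ, M i ⊓ (M (-i - 1)).comap (N ^ i) ≤ M (i - 1)

theorem isMonodromyFiltration_iff :
    IsMonodromyFiltration N M ↔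
      Monotone M ∧ (∃ a, M a = ⊥) ∧ (∃ b, M b = ⊤) ∧ (∀ i, (M i).map N ≤ M (i - 2)) ∧
      ∀ i : ℕ, ∀ h : M (i - 1) ≤ (M (-i - 1)).comap (N ^ i),
        ((M i).map (M (i - 1)).mkQ).map ((M (i - 1)).mapQ (M (-i - 1)) (N ^ i) h) =
            (M (-i)).map (M (-i - 1)).mkQ ∧
          ∀ x ∈ (M i).map (M (i - 1)).mkQ,
            (M (i - 1)).mapQ (M (-i - 1)) (N ^ i) h x = 0 → x = 0 := by
  simp only [map_mapQ_map_mkQ_eq_iff, forall_mem_map_mkQ_mapQ_eq_zero_iff]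
  constructor
  · intro hM
    refine ⟨hM.monotone, hM.exists_eq_bot, hM.exists_eq_top, hM.map_le,
      fun i _ => ⟨le_antisymm (sup_le_sup_left ?_ _) (sup_le le_sup_left (hM.le_sup_map_pow i)),
        hM.inf_comap_pow_le i⟩⟩
    exact (map_pow_le_of_map_le hM.map_le i i).trans_eq (congrArg M (by ring))
  · rintro ⟨hmono, hbot, htop, hmap, hgr⟩
    have hcomap (i : ℕ) : M (i - 1) ≤ (M (-i - 1)).comap (N ^ i) :=
      Submodule.map_le_iff_le_comap.mp <|
        (map_pow_le_of_map_le hmap i (i - 1)).trans_eq (congrArg M (by ring))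
    exact ⟨hmono, hbot, htop, hmap, fun i => le_sup_right.trans (hgr i (hcomap i)).1.ge,
      fun i => (hgr i (hcomap i)).2⟩

namespace IsMonodromyFiltration

theorem map_pow_le (hM : IsMonodromyFiltration N M) (i : ℕ) : (M i).map (N ^ i) ≤ M (-i) :=
  (map_pow_le_of_map_le hM.map_le i i).trans_eq (congrArg M (by ring))

theorem comap_pow_le (hM : IsMonodromyFiltration N M) (i : ℕ) :
    (M (-i - 1)).comap (N ^ i) ≤ M (i - 1) := by
  intro x hx
  have descend (d : ℕ) : x ∈ M (i - 1 + d) → x ∈ M (i - 1) := by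
    induction d with
    | zero => simp
    | succ d ih =>
      intro hxd
      have hxM : x ∈ M (i + d : ℕ) := by convert hxd using 2; push_cast; ring
      have hNx : (N ^ (i + d)) x ∈ M (-(i + d : ℕ) - 1) := by
        rw [add_comm i d, pow_add, Module.End.mul_apply]
        exact hM.monotone (by push_cast; linarith)
          (map_pow_le_of_map_le hM.map_le d _ (Submodule.mem_map_of_mem hx))
      apply ih
      convert hM.inf_comap_pow_le (i + d) ⟨hxM, hNx⟩ using 2
      push_cast; ring
  obtain ⟨b, hb⟩ := hM.exists_eq_top
  exact descend (b - (i - 1)).toNat (hM.monotone (show b ≤ _ by omega) (hb ▸ Submodule.mem_top))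

theorem natCast_le_of_neg_le (hM : IsMonodromyFiltration N M) (hM' : IsMonodromyFiltration N M')
    {j : ℕ} (h : M (-j - 2) ≤ M' (-j - 2)) : M j ≤ M' j := by
  intro x hx
  have hNx : (N ^ (j + 1)) x ∈ M (-j - 2) := by
    convert map_pow_le_of_map_le hM.map_le (j + 1) j (Submodule.mem_map_of_mem hx) using 2
    push_cast; ring
  have hNx' : (N ^ (j + 1)) x ∈ M' (-(j + 1 : ℕ) - 1) := by
    convert h hNx using 2
    push_cast; ring
  simpa using hM'.comap_pow_le (j + 1) hNx'

theorem neg_natCast_le (hM : IsMonodromyFiltration N M) (hM' : IsMonodromyFiltration N M')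
    (j : ℕ) : M (-j) ≤ M' (-j) := by
  obtain ⟨a, ha⟩ := hM.exists_eq_bot
  have descend (d : ℕ) : ∀ j : ℕ, a.natAbs ≤ j + d → M (-j) ≤ M' (-j) := by
    induction d with
    | zero =>
      intro j hj
      exact ((hM.monotone (show -(j : ℤ) ≤ a by omega)).trans_eq ha).trans bot_le
    | succ d ih =>
      intro j hj
      have hsucc : M (-j - 1) ≤ M' (-j - 1) := by
        convert ih (j + 1) (by omega) using 2 <;> push_cast <;> ring
      have hsucc₂ : M (-j - 2) ≤ M' (-j - 2) := by
        convert ih (j + 2) (by omega) using 2 <;> push_cast <;> ring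
      have hj' : M j ≤ M' j := hM.natCast_le_of_neg_le hM' hsucc₂
      calc M (-j) ≤ M (-j - 1) ⊔ (M j).map (N ^ j) := hM.le_sup_map_pow j
        _ ≤ M' (-j - 1) ⊔ (M' j).map (N ^ j) := sup_le_sup hsucc (Submodule.map_mono hj')
        _ ≤ M' (-j) := sup_le (hM'.monotone (by omega)) (hM'.map_pow_le j)
  exact descend a.natAbs j (by omega)

theorem le (hM : IsMonodromyFiltration N M) (hM' : IsMonodromyFiltration N M') : M ≤ M' := by
  intro k
  obtain ⟨j, rfl | rfl⟩ := k.eq_nat_or_neg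
  · refine hM.natCast_le_of_neg_le hM' ?_
    convert hM.neg_natCast_le hM' (j + 2) using 2 <;> push_cast <;> ring
  · exact hM.neg_natCast_le hM' j

theorem unique (hM : IsMonodromyFiltration N M) (hM' : IsMonodromyFiltration N M') : M = M' :=
  le_antisymm (hM.le hM') (hM'.le hM)

end IsMonodromyFiltration

/-- The explicit monodromy filtration of a nilpotent `N`, whose `i`-th summand equals
`ker N ^ (k + i + 1) ⊓ range N ^ i`. A negative exponent is truncated to `0`, where the kernel
vanishes. -/
def monodromyFiltration (N : Module.End R V) (k : ℤ) : Submodule R V :=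
  ⨆ i : ℕ, (LinearMap.ker (N ^ (k + 2 * i + 1).toNat)).map (N ^ i)

theorem map_pow_ker_pow_eq_bot (N : Module.End R V) {m n : ℕ} (hmn : m ≤ n) :
    (LinearMap.ker (N ^ m)).map (N ^ n) = ⊥ :=
  LinearMap.le_ker_iff_map.mp (N.iterateKer.monotone hmn)

theorem monotone_monodromyFiltration (N : Module.End R V) : Monotone (monodromyFiltration N) :=
  fun _ _ hkl => iSup_mono fun _ => Submodule.map_mono <| N.iterateKer.monotone <| by omega

theorem map_pow_ker_pow_le_monodromyFiltration (N : Module.End R V) (i : ℕ) {m : ℕ} {k : ℤ}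
    (hm : m ≤ k + 2 * i + 1) :
    (LinearMap.ker (N ^ m)).map (N ^ i) ≤ monodromyFiltration N k :=
  (Submodule.map_mono <| N.iterateKer.monotone <| by omega).trans <|
    le_iSup (fun i : ℕ => (LinearMap.ker (N ^ (k + 2 * i + 1).toNat)).map (N ^ i)) i

theorem ker_pow_le_monodromyFiltration (N : Module.End R V) {m : ℕ} {k : ℤ} (hm : m ≤ k + 1) :
    LinearMap.ker (N ^ m) ≤ monodromyFiltration N k := by
  simpa [Module.End.one_eq_id] using
    map_pow_ker_pow_le_monodromyFiltration N 0 (k := k) (m := m) (by simpa using hm)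

theorem map_monodromyFiltration_le (N : Module.End R V) (k : ℤ) :
    (monodromyFiltration N k).map N ≤ monodromyFiltration N (k - 2) := by
  rw [monodromyFiltration, Submodule.map_iSup]
  refine iSup_le fun i => ?_
  rw [← Submodule.map_comp, ← Module.End.mul_eq_comp, ← pow_succ']
  obtain hneg | hpos := le_total (k + 2 * i + 1) 0
  · rw [map_pow_ker_pow_eq_bot N (by omega)]
    exact bot_le
  · exact map_pow_ker_pow_le_monodromyFiltration N (i + 1) (by push_cast; omega)

theorem monodromyFiltration_neg_le_map_pow (N : Module.End R V) (j : ℕ) :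
    monodromyFiltration N (-j) ≤ (monodromyFiltration N j).map (N ^ j) := by
  refine iSup_le fun i => ?_
  obtain hij | hji := lt_or_ge i j
  · rw [map_pow_ker_pow_eq_bot N (by omega)]
    exact bot_le
  · obtain ⟨c, rfl⟩ := Nat.exists_eq_add_of_le hji
    rw [pow_add, Module.End.mul_eq_comp, Submodule.map_comp]
    exact Submodule.map_mono <| map_pow_ker_pow_le_monodromyFiltration N c (by push_cast; omega)

theorem comap_pow_monodromyFiltration_le (N : Module.End R V) (j : ℕ) :
    (monodromyFiltration N (-j - 1)).comap (N ^ j) ≤ monodromyFiltration N (j - 1) := by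
  intro x hx
  obtain ⟨z, hz, hzx⟩ : ∃ z ∈ monodromyFiltration N (j + 1 : ℕ), (N ^ (j + 1)) z = (N ^ j) x :=
    monodromyFiltration_neg_le_map_pow N (j + 1) <| by
      convert Submodule.mem_comap.mp hx using 2
      push_cast; ring
  have hNz : N z ∈ monodromyFiltration N (j - 1) := by
    convert map_monodromyFiltration_le N _ (Submodule.mem_map_of_mem hz) using 2
    push_cast; ring
  have hker : x - N z ∈ LinearMap.ker (N ^ j) := by
    rw [LinearMap.mem_ker, map_sub, ← hzx, pow_succ, Module.End.mul_apply, sub_self]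
  simpa using add_mem (ker_pow_le_monodromyFiltration N (by simp) hker) hNz

theorem monodromyFiltration_neg_eq_bot {n : ℕ} (hn : N ^ n = 0) :
    monodromyFiltration N (-n) = ⊥ := by
  refine iSup_eq_bot.mpr fun i => ?_
  obtain hin | hni := lt_or_ge i n
  · exact map_pow_ker_pow_eq_bot N (by omega)
  · rw [pow_eq_zero_of_le hni hn, Submodule.map_zero]

theorem monodromyFiltration_eq_top {n : ℕ} (hn : N ^ n = 0) : monodromyFiltration N n = ⊤ := by
  simpa [hn] using ker_pow_le_monodromyFiltration N (m := n) (k := n) (by omega)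

theorem isMonodromyFiltration_monodromyFiltration (hN : IsNilpotent N) :
    IsMonodromyFiltration N (monodromyFiltration N) := by
  obtain ⟨n, hn⟩ := hN
  exact
    { monotone := monotone_monodromyFiltration N
      exists_eq_bot := ⟨-n, monodromyFiltration_neg_eq_bot hn⟩
      exists_eq_top := ⟨n, monodromyFiltration_eq_top hn⟩
      map_le := map_monodromyFiltration_le N
      le_sup_map_pow := fun i => (monodromyFiltration_neg_le_map_pow N i).trans le_sup_right
      inf_comap_pow_le := fun i => inf_le_right.trans (comap_pow_monodromyFiltration_le N i) }

end Monodromy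

theorem stmt2_general {R V : Type*} [Ring R] [AddCommGroup V] [Module R V]
    (N : V →ₗ[R] V) (hN : IsNilpotent N) :
    ∃! M : ℤ → Submodule R V,
      Monotone M ∧ (∃ a : ℤ, M a = ⊥) ∧ (∃ b : ℤ, M b = ⊤) ∧
      (∀ i : ℤ, Submodule.map N (M i) ≤ M (i - 2)) ∧
      (∀ i : ℕ, ∀ h : M ((i : ℤ) - 1) ≤ (M (-(i : ℤ) - 1)).comap (N ^ i),
        Submodule.map (Submodule.mapQ (M ((i : ℤ) - 1)) (M (-(i : ℤ) - 1)) (N ^ i) h)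
            ((M (i : ℤ)).map (M ((i : ℤ) - 1)).mkQ)
          = (M (-(i : ℤ))).map (M (-(i : ℤ) - 1)).mkQ ∧
        ∀ x ∈ (M (i : ℤ)).map (M ((i : ℤ) - 1)).mkQ,
          Submodule.mapQ (M ((i : ℤ) - 1)) (M (-(i : ℤ) - 1)) (N ^ i) h x = 0 → x = 0) := by
  simp only [← isMonodromyFiltration_iff]
  exact ⟨monodromyFiltration N, isMonodromyFiltration_monodromyFiltration hN,
    fun M hM => hM.unique (isMonodromyFiltration_monodromyFiltration hN)⟩

/-- Existence and uniqueness of the monodromy filtration of a nilpotent endomorphism `N`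
of a finite-dimensional vector space `V` over a field of characteristic `0`:
a finite increasing filtration `M` with `N (M i) ⊆ M (i-2)` such that for every `i ≥ 0`
the map `N^i` induces an isomorphism `gr^M_i V ≃ gr^M_{-i} V` (expressed via the induced
map on quotients `V / M (i-1) → V / M (-i-1)`, which carries the graded piece
`M i / M (i-1)` bijectively onto `M (-i) / M (-i-1)`). -/
theorem stmt2 {K V : Type*} [Field K] [CharZero K] [AddCommGroup V] [Module K V]
    [FiniteDimensional K V] (N : V →ₗ[K] V) (hN : IsNilpotent N) :
    ∃! M : ℤ → Submodule K V,
      Monotone M ∧ (∃ a : ℤ, M a = ⊥) ∧ (∃ b : ℤ, M b = ⊤) ∧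
      (∀ i : ℤ, Submodule.map N (M i) ≤ M (i - 2)) ∧
      (∀ i : ℕ, ∀ h : M ((i : ℤ) - 1) ≤ (M (-(i : ℤ) - 1)).comap (N ^ i),
        Submodule.map (Submodule.mapQ (M ((i : ℤ) - 1)) (M (-(i : ℤ) - 1)) (N ^ i) h)
            ((M (i : ℤ)).map (M ((i : ℤ) - 1)).mkQ)
          = (M (-(i : ℤ))).map (M (-(i : ℤ) - 1)).mkQ ∧
        ∀ x ∈ (M (i : ℤ)).map (M ((i : ℤ) - 1)).mkQ,
          Submodule.mapQ (M ((i : ℤ) - 1)) (M (-(i : ℤ) - 1)) (N ^ i) h x = 0 → x = 0) :=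
  stmt2_general N hN
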